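/- arXiv:2006.03640 — 2 statements merged into one kernel-verified Lean document; each statement's English description precedes it below -/
import Mathlib

section
/- For k = 2 and k = 3, the torsion subgroup of the cokernel of the linear map N_k : ℤ^k → ℤ^{C(k,2)} is cyclic of order 3; for every k ≥ 4, the cokernel of N_k : ℤ^k → ℤ^{C(k,2)} is torsion-free (equivalently, the last nonzero invariant factor of N_k equals 1). -/
/-!
The matrix `N_k = e^{(2)}(1, k, D_{k+1})` of the second differential of the complex
`Hom(P_*(1,k), D_{k+1})` computing `Ext^*(Λ^{k+1}, D_{k+1})` over the integral Schur
algebra (Stergiopoulou, proof of Lemma 2.4).  For `k ≥ 2`, `N_k` has `C(k,2)` rows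
and `k` columns; it is defined recursively by `N_2 = (3 3)` and, for `k ≥ 3`,
`N_k = [[v_k, D_k], [0, −N_{k−1}]]`, where `v_k = (3, −2, 2, −2, …, (−1)^{k−2}·2)ᵀ`
is a column vector of size `k − 1` and `D_k = diag(3, 2, …, 2)` of size
`(k−1) × (k−1)`.  Below, `Nmat j` is `N_{j+2}` (so `k = j + 2` ranges over `k ≥ 2`).
-/

/-- The column vector `(3, −2, 2, −2, …)ᵀ`: first entry `3`, then alternating `∓2`. -/
def vcol (m : ℕ) : Matrix (Fin m) (Fin 1) ℤ :=
  Matrix.of fun i _ => if (i : ℕ) = 0 then 3 else (-1) ^ (i : ℕ) * 2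

/-- The diagonal matrix `diag(3, 2, 2, …, 2)`. -/
def dmat (m : ℕ) : Matrix (Fin m) (Fin m) ℤ :=
  Matrix.diagonal fun i => if (i : ℕ) = 0 then 3 else 2

private lemma choose2_step (m : ℕ) : m + 2 + ((m + 2).choose 2) = (m + 3).choose 2 := by
  have h := Nat.choose_succ_succ (m + 2) 1
  simp only [Nat.succ_eq_add_one, Nat.choose_one_right, show (1 : ℕ) + 1 = 2 from rfl,
    show m + 2 + 1 = m + 3 from rfl] at h
  omega

/-- `Nmat j` is the matrix `N_k` (with `k = j + 2`): `N_2 = (3 3)` and, for `k ≥ 3`,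
`N_k` is the block matrix `[[v_k, D_k], [0, −N_{k−1}]]`. -/
def Nmat : (j : ℕ) → Matrix (Fin ((j + 2).choose 2)) (Fin (j + 2)) ℤ
  | 0 => Matrix.of fun _ _ => 3
  | j + 1 =>
    Matrix.reindex
      (finSumFinEquiv.trans (finCongr (choose2_step j)))
      (finSumFinEquiv.trans (finCongr (by omega)))
      (Matrix.fromBlocks (vcol (j + 2)) (dmat (j + 2)) 0 (-(Nmat j)))

/-!
Substituting `x i = (-1)^i z i` turns the rows of `N_k` into `± w(p, q) (z p - z q)` for `p < q`,
where `w = 3` on the edges of the path `0 - 1 - ⋯ - (k - 1)` and `w = 2` on the other pairs.  In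
particular constant `z` are killed, and if `n y = N_k x`, then `y` lies in the image as soon as
`n` divides all `z 0 - z q`.

Now suppose that `n` divides every row.  Along the path, `n ∣ 3 (z 0 - z q)` for all `q`, and for
`q ≥ 2` also `n ∣ 2 (z 0 - z q)`, so `n ∣ z 0 - z q`.  Only `q = 1` is left, and since
`n * y 0 = 3 (z 0 - z 1)` it is controlled by `y 0` modulo `3`: the first coordinate embeds the
torsion of the cokernel into `ZMod 3`.  For `k ≥ 4` the vertex `3` gives
`2 (z 0 - z 1) = 2 (z 0 - z 3) - 2 (z 1 - z 3)` and the torsion vanishes; for `k ≤ 3` there is no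
such vertex, and the image of the second basis vector divided by `3` is a generator.
-/

section TorsionQuotient

open scoped nonZeroDivisors

variable {R M P : Type*} [CommRing R] [AddCommGroup M] [Module R M] [AddCommGroup P] [Module R P]
  {N : Submodule R M}

lemma mk_mem_torsion_quotient_iff {y : M} :
    (Submodule.Quotient.mk y : M ⧸ N) ∈ Submodule.torsion R (M ⧸ N) ↔ ∃ a ∈ R⁰, a • y ∈ N := by
  simp [← Submodule.Quotient.mk_eq_zero N, Submonoid.smul_def]

lemma torsion_quotient_eq_bot_iff :
    Submodule.torsion R (M ⧸ N) = ⊥ ↔ ∀ a ∈ R⁰, ∀ y, a • y ∈ N → y ∈ N := by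
  rw [Submodule.eq_bot_iff, (Submodule.Quotient.mk_surjective N).forall]
  simp only [mk_mem_torsion_quotient_iff, Submodule.Quotient.mk_eq_zero]
  grind

lemma nonempty_torsion_quotient_equiv (f : M →ₗ[R] P) (hN : N ≤ LinearMap.ker f)
    (hinj : ∀ a ∈ R⁰, ∀ y, a • y ∈ N → f y = 0 → y ∈ N)
    (hsurj : ∀ c, ∃ y, f y = c ∧ ∃ a ∈ R⁰, a • y ∈ N) :
    Nonempty (Submodule.torsion R (M ⧸ N) ≃ₗ[R] P) := by
  let F := (N.liftQ f hN).domRestrict (Submodule.torsion R (M ⧸ N))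
  refine ⟨LinearEquiv.ofBijective F ⟨(injective_iff_map_eq_zero F).2 ?_, fun c => ?_⟩⟩
  · rintro ⟨q, hq⟩ hFq
    obtain ⟨y, rfl⟩ := Submodule.Quotient.mk_surjective N q
    obtain ⟨a, ha, hay⟩ := mk_mem_torsion_quotient_iff.1 hq
    exact Subtype.ext ((Submodule.Quotient.mk_eq_zero N).2 (hinj a ha y hay hFq))
  · obtain ⟨y, rfl, hy⟩ := hsurj c
    exact ⟨⟨Submodule.Quotient.mk y, mk_mem_torsion_quotient_iff.2 hy⟩, rfl⟩

end TorsionQuotient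

section PathWeight

/-- The weight of the edge `{p, q}`, `p < q`, of the complete graph on `0, …, k - 1`: it is `3`
on the edges of the path `0 - 1 - ⋯ - (k - 1)` and `2` on all others. -/
def pathWeight (p q : ℕ) : ℤ := if q = p + 1 then 3 else 2

lemma pathWeight_self_succ (p : ℕ) : pathWeight p (p + 1) = 3 := if_pos rfl

lemma pathWeight_of_add_two_le {p q : ℕ} (h : p + 2 ≤ q) : pathWeight p q = 2 := if_neg (by omega)

lemma pathWeight_succ_succ (p q : ℕ) : pathWeight (p + 1) (q + 1) = pathWeight p q := by
  simp [pathWeight]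

variable {m : ℕ} {n : ℤ}

lemma dvd_three_mul_apply_zero_sub {z : Fin (m + 1) → ℤ}
    (h : ∀ p q : Fin (m + 1), p < q → n ∣ pathWeight p q * (z p - z q)) (q : Fin (m + 1)) :
    n ∣ 3 * (z 0 - z q) := by
  induction q using Fin.induction with
  | zero => simp
  | succ i ih =>
    have hstep : n ∣ 3 * (z i.castSucc - z i.succ) := by
      simpa [pathWeight_self_succ] using h i.castSucc i.succ i.castSucc_lt_succ
    exact (dvd_add ih hstep).trans (dvd_of_eq (by ring))

lemma dvd_apply_zero_sub_of_two_le {z : Fin (m + 1) → ℤ}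
    (h : ∀ p q : Fin (m + 1), p < q → n ∣ pathWeight p q * (z p - z q))
    {q : Fin (m + 1)} (hq : 2 ≤ (q : ℕ)) : n ∣ z 0 - z q := by
  have htwo : n ∣ 2 * (z 0 - z q) := by
    simpa [pathWeight_of_add_two_le hq] using h 0 q (Fin.lt_def.2 (two_pos.trans_le hq))
  exact (dvd_sub (dvd_three_mul_apply_zero_sub h q) htwo).trans (dvd_of_eq (by ring))

lemma dvd_apply_zero_sub_apply_one (hm : 2 ≤ m) {z : Fin (m + 2) → ℤ}
    (h : ∀ p q : Fin (m + 2), p < q → n ∣ pathWeight p q * (z p - z q)) : n ∣ z 0 - z 1 := by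
  let three : Fin (m + 2) := ⟨3, by omega⟩
  have hzero : n ∣ z 0 - z three := dvd_apply_zero_sub_of_two_le h (by simp [three])
  have hone : n ∣ 2 * (z 1 - z three) := by
    simpa [three, pathWeight] using h 1 three (Fin.lt_def.2 (by simp [three]))
  have htwo : n ∣ 2 * (z 0 - z 1) :=
    (dvd_sub (hzero.mul_left 2) hone).trans (dvd_of_eq (by ring))
  exact (dvd_sub (dvd_three_mul_apply_zero_sub h 1) htwo).trans (dvd_of_eq (by ring))

end PathWeight

/-- The involution `z ↦ (z 0, -z 1, z 2, …)`, which absorbs the alternating signs of `Nmat`. -/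
def altSign (m : ℕ) : (Fin m → ℤ) →ₗ[ℤ] (Fin m → ℤ) :=
  LinearMap.pi fun i => (-1) ^ (i : ℕ) • LinearMap.proj i

lemma altSign_apply {m : ℕ} (z : Fin m → ℤ) (i : Fin m) :
    altSign m z i = (-1) ^ (i : ℕ) * z i := by
  simp [altSign]

lemma altSign_involutive (m : ℕ) : Function.Involutive (altSign m) := fun z => by
  ext i
  simp [altSign_apply, ← mul_assoc, ← mul_pow]

lemma tail_altSign {m : ℕ} (z : Fin (m + 1) → ℤ) :
    Fin.tail (altSign (m + 1) z) = -altSign m (Fin.tail z) := by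
  ext i
  simp [Fin.tail, altSign_apply, pow_succ]

/-- The splitting of the rows of `Nmat (j + 1)` into those of its upper and lower blocks. -/
def rowEquiv (j : ℕ) : Fin (j + 2) ⊕ Fin ((j + 2).choose 2) ≃ Fin ((j + 3).choose 2) :=
  finSumFinEquiv.trans (finCongr (choose2_step j))

instance (j : ℕ) : NeZero ((j + 2).choose 2) := ⟨(Nat.choose_pos (by omega)).ne'⟩

lemma rowEquiv_inl_zero (j : ℕ) : rowEquiv j (Sum.inl 0) = 0 := rfl

lemma vcol_apply {m : ℕ} (i : Fin m) (l : Fin 1) :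
    vcol m i l = (-1) ^ (i : ℕ) * pathWeight 0 (i + 1) := by
  by_cases hi : (i : ℕ) = 0 <;> simp [vcol, pathWeight, hi]

lemma dmat_mulVec {m : ℕ} (x : Fin m → ℤ) (i : Fin m) :
    (dmat m).mulVec x i = pathWeight 0 (i + 1) * x i := by
  simp only [dmat, Matrix.mulVec_diagonal, pathWeight, Nat.add_right_cancel_iff]

lemma Nmat_succ_mulVec_rowEquiv (j : ℕ) (x : Fin (j + 3) → ℤ) :
    (Nmat (j + 1)).mulVec x ∘ rowEquiv j =
      Sum.elim
        (fun i : Fin (j + 2) => pathWeight 0 (i + 1) * ((-1) ^ (i : ℕ) * x 0 + x i.succ))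
        (-(Nmat j).mulVec (Fin.tail x)) := by
  let colEquiv : Fin 1 ⊕ Fin (j + 2) ≃ Fin (j + 3) :=
    finSumFinEquiv.trans (finCongr (add_comm 1 (j + 2)))
  have hinl : x ∘ colEquiv ∘ Sum.inl = fun _ => x 0 := by
    ext i
    rw [Subsingleton.elim i 0]
    rfl
  have hinr : x ∘ colEquiv ∘ Sum.inr = Fin.tail x := by
    ext i
    exact congrArg x (Fin.ext (add_comm 1 (i : ℕ)))
  have hmul : (Nmat (j + 1)).mulVec x ∘ rowEquiv j =
      (Matrix.fromBlocks (vcol (j + 2)) (dmat (j + 2)) 0 (-(Nmat j))).mulVec (x ∘ colEquiv) := by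
    have hNmat : Nmat (j + 1) = Matrix.submatrix
        (Matrix.fromBlocks (vcol (j + 2)) (dmat (j + 2)) 0 (-(Nmat j)))
        (rowEquiv j).symm colEquiv.symm := rfl
    rw [hNmat, Matrix.submatrix_mulVec_equiv]
    ext r
    simp
  rw [hmul, Matrix.fromBlocks_mulVec, Function.comp_assoc, Function.comp_assoc, hinl, hinr]
  congr 1
  · ext i
    have hvcol : (vcol (j + 2)).mulVec (fun _ => x 0) i =
        (-1) ^ (i : ℕ) * pathWeight 0 (i + 1) * x 0 := by
      simp [Matrix.mulVec, dotProduct, vcol_apply]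
    rw [Pi.add_apply, hvcol, dmat_mulVec, Fin.tail]
    ring
  · simp [Matrix.neg_mulVec]

/-- The map `Nmat j` in the coordinates `z = altSign x`.  Up to the signs and the order of the
rows it is the coboundary map of the complete graph on `j + 2` vertices, weighted by
`pathWeight`. -/
def coboundary (j : ℕ) : (Fin (j + 2) → ℤ) →ₗ[ℤ] (Fin ((j + 2).choose 2) → ℤ) :=
  (Nmat j).mulVecLin ∘ₗ altSign (j + 2)

lemma range_coboundary (j : ℕ) :
    LinearMap.range (coboundary j) = LinearMap.range (Nmat j).mulVecLin :=
  LinearMap.range_comp_of_range_eq_top _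
    (LinearMap.range_eq_top.2 (altSign_involutive _).surjective)

lemma coboundary_zero_apply (z : Fin 2 → ℤ) (r : Fin (Nat.choose 2 2)) :
    coboundary 0 z r = 3 * (z 0 - z 1) := by
  suffices 3 * z 0 + -(3 * z 1) = 3 * (z 0 - z 1) by
    simpa [coboundary, Nmat, Matrix.mulVec, dotProduct, Fin.sum_univ_two, altSign_apply]
  ring

lemma coboundary_succ_inl (j : ℕ) (z : Fin (j + 3) → ℤ) (i : Fin (j + 2)) :
    coboundary (j + 1) z (rowEquiv j (Sum.inl i)) =
      (-1) ^ (i : ℕ) * (pathWeight 0 (i + 1) * (z 0 - z i.succ)) := by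
  have hrow := congrFun (Nmat_succ_mulVec_rowEquiv j (altSign (j + 3) z)) (Sum.inl i)
  rw [Function.comp_apply, Sum.elim_inl, altSign_apply, altSign_apply] at hrow
  refine hrow.trans ?_
  rw [Fin.val_zero, Fin.val_succ]
  ring

lemma coboundary_succ_inr (j : ℕ) (z : Fin (j + 3) → ℤ) (r : Fin ((j + 2).choose 2)) :
    coboundary (j + 1) z (rowEquiv j (Sum.inr r)) = coboundary j (Fin.tail z) r := by
  have hrow := congrFun (Nmat_succ_mulVec_rowEquiv j (altSign (j + 3) z)) (Sum.inr r)
  rw [Function.comp_apply, Sum.elim_inr, tail_altSign, Matrix.mulVec_neg, neg_neg] at hrow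
  exact hrow

lemma coboundary_apply_zero (j : ℕ) (z : Fin (j + 2) → ℤ) :
    coboundary j z 0 = 3 * (z 0 - z 1) := by
  cases j with
  | zero => exact coboundary_zero_apply z 0
  | succ j =>
    rw [← rowEquiv_inl_zero, coboundary_succ_inl]
    simp [pathWeight]

lemma dvd_coboundary_iff {j : ℕ} {n : ℤ} {z : Fin (j + 2) → ℤ} :
    (∀ r, n ∣ coboundary j z r) ↔
      ∀ p q : Fin (j + 2), p < q → n ∣ pathWeight p q * (z p - z q) := by
  induction j with
  | zero =>
    have : Nonempty (Fin (Nat.choose 2 2)) := ⟨0⟩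
    simp [coboundary_zero_apply, Fin.forall_fin_two, pathWeight]
  | succ j ih =>
    rw [← (rowEquiv j).forall_congr_right, Sum.forall]
    have hsign (i : ℕ) : IsUnit ((-1 : ℤ) ^ i) := isUnit_neg_one.pow i
    simp only [coboundary_succ_inl, coboundary_succ_inr, ih, (hsign _).dvd_mul_left]
    simp [Fin.forall_fin_succ (n := j + 2), pathWeight_succ_succ, Fin.tail]

lemma coboundary_const (j : ℕ) (c : ℤ) : coboundary j (fun _ => c) = 0 := by
  ext r
  exact zero_dvd_iff.1 (dvd_coboundary_iff.2 (by simp) r)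

section Saturation

variable {j : ℕ} {n : ℤ} {y : Fin ((j + 2).choose 2) → ℤ} {z : Fin (j + 2) → ℤ}

lemma dvd_pathWeight_mul_sub (h : coboundary j z = n • y) (p q : Fin (j + 2)) (hpq : p < q) :
    n ∣ pathWeight p q * (z p - z q) :=
  dvd_coboundary_iff.1 (fun r => ⟨y r, congrFun h r⟩) p q hpq

lemma three_mul_apply_zero_sub_eq (h : coboundary j z = n • y) : 3 * (z 0 - z 1) = n * y 0 :=
  (coboundary_apply_zero j z).symm.trans (congrFun h 0)

lemma mem_range_coboundary_of_dvd_sub (hn : n ≠ 0) (h : coboundary j z = n • y)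
    (hz : ∀ q, n ∣ z 0 - z q) : y ∈ LinearMap.range (coboundary j) := by
  choose w hw using hz
  have hzw : z = (fun _ => z 0) - n • w := by
    ext q
    simp [← hw]
  refine ⟨-w, smul_right_injective _ hn ?_⟩
  calc n • coboundary j (-w) = coboundary j ((fun _ => z 0) - n • w) := by
        rw [map_sub, map_smul, map_neg, coboundary_const, zero_sub, smul_neg]
    _ = n • y := by rw [← hzw, h]

lemma mem_range_coboundary_of_smul_mem (hn : n ≠ 0)
    (hy : n • y ∈ LinearMap.range (coboundary j)) (hy0 : 3 ∣ y 0) :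
    y ∈ LinearMap.range (coboundary j) := by
  obtain ⟨z, hz⟩ := hy
  obtain ⟨c, hc⟩ := hy0
  have hdvd := dvd_pathWeight_mul_sub hz
  have hone : z 0 - z 1 = n * c := by linarith [hc ▸ three_mul_apply_zero_sub_eq hz]
  refine mem_range_coboundary_of_dvd_sub hn hz fun q => ?_
  obtain hq | hq | hq : (q : ℕ) = 0 ∨ (q : ℕ) = 1 ∨ 2 ≤ (q : ℕ) := by omega
  · simp [show q = 0 from Fin.ext hq]
  · exact ⟨c, (show q = 1 from Fin.ext hq) ▸ hone⟩
  · exact dvd_apply_zero_sub_of_two_le hdvd hq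

lemma three_dvd_apply_zero_of_mem_range (hy : y ∈ LinearMap.range (coboundary j)) : 3 ∣ y 0 := by
  obtain ⟨z, rfl⟩ := hy
  exact ⟨_, coboundary_apply_zero j z⟩

lemma three_dvd_apply_zero_of_smul_mem (hj : 2 ≤ j) (hn : n ≠ 0)
    (hy : n • y ∈ LinearMap.range (coboundary j)) : 3 ∣ y 0 := by
  obtain ⟨z, hz⟩ := hy
  obtain ⟨c, hc⟩ : n ∣ z 0 - z 1 := dvd_apply_zero_sub_apply_one hj (dvd_pathWeight_mul_sub hz)
  refine ⟨c, mul_left_cancel₀ hn ?_⟩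
  rw [← three_mul_apply_zero_sub_eq hz, hc]
  ring

end Saturation

lemma exists_three_smul_mem_range_coboundary {j : ℕ} (hj : j ≤ 1) :
    ∃ g, g 0 = 1 ∧ (3 : ℤ) • g ∈ LinearMap.range (coboundary j) := by
  let z : Fin (j + 2) → ℤ := Pi.single 1 (-1)
  have hdvd : ∀ r, 3 ∣ coboundary j z r := dvd_coboundary_iff.2 fun p q hpq => by
    -- Since `j ≤ 1`, all edges at the vertex `1` lie on the path.
    by_cases hedge : (q : ℕ) = p + 1
    · rw [hedge, pathWeight_self_succ]
      exact dvd_mul_right _ _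
    · have hp : p ≠ 1 := Fin.ne_of_val_ne (by rw [Fin.val_one]; omega)
      have hq : q ≠ 1 := Fin.ne_of_val_ne (by rw [Fin.val_one]; omega)
      simp [z, hp, hq]
  choose g hg using hdvd
  refine ⟨g, ?_, z, funext hg⟩
  have hz : z 0 - z 1 = 1 := by simp [z]
  linarith [hg 0, coboundary_apply_zero j z]

lemma torsion_coker_Nmat_of_le_one {j : ℕ} (hj : j ≤ 1) :
    Nonempty (Submodule.torsion ℤ ((Fin ((j + 2).choose 2) → ℤ) ⧸
      LinearMap.range (Nmat j).mulVecLin) ≃+ ZMod 3) := by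
  rw [← range_coboundary]
  let f : (Fin ((j + 2).choose 2) → ℤ) →ₗ[ℤ] ZMod 3 :=
    (Int.castAddHom (ZMod 3)).toIntLinearMap ∘ₗ LinearMap.proj 0
  have hf : ∀ y, f y = 0 ↔ 3 ∣ y 0 := fun y => ZMod.intCast_zmod_eq_zero_iff_dvd (y 0) 3
  obtain ⟨g, hg0, hg⟩ := exists_three_smul_mem_range_coboundary hj
  obtain ⟨e⟩ := nonempty_torsion_quotient_equiv f
    (fun y hy => (hf y).2 (three_dvd_apply_zero_of_mem_range hy))
    (fun a ha y hay hy =>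
      mem_range_coboundary_of_smul_mem (nonZeroDivisors.ne_zero ha) hay ((hf y).1 hy))
    (fun c => by
      obtain ⟨a, rfl⟩ := ZMod.intCast_surjective c
      refine ⟨a • g, by simp [f, hg0], 3, by simp, ?_⟩
      rw [smul_comm]
      exact Submodule.smul_mem _ a hg)
  exact ⟨e.toAddEquiv⟩

lemma torsion_coker_Nmat_eq_bot {j : ℕ} (hj : 2 ≤ j) :
    Submodule.torsion ℤ ((Fin ((j + 2).choose 2) → ℤ) ⧸
      LinearMap.range (Nmat j).mulVecLin) = ⊥ := by
  rw [← range_coboundary, torsion_quotient_eq_bot_iff]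
  intro a ha y hay
  have ha0 := nonZeroDivisors.ne_zero ha
  exact mem_range_coboundary_of_smul_mem ha0 hay (three_dvd_apply_zero_of_smul_mem hj ha0 hay)

/-- For `k = 2, 3`, the torsion subgroup of the cokernel of
`N_k : ℤ^k → ℤ^{C(k,2)}` is cyclic of order `3`; for every `k ≥ 4` the cokernel is
torsion-free.  (Here `Nmat j = N_{j+2}`, so `k = 2, 3` are `j = 0, 1` and `k ≥ 4`
is `j ≥ 2`.) -/
theorem torsion_coker_Nmat :
    Nonempty ((Submodule.torsion ℤ ((Fin (((0 : ℕ) + 2).choose 2) → ℤ) ⧸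
        LinearMap.range (Nmat 0).mulVecLin)) ≃+ ZMod 3) ∧
    Nonempty ((Submodule.torsion ℤ ((Fin (((1 : ℕ) + 2).choose 2) → ℤ) ⧸
        LinearMap.range (Nmat 1).mulVecLin)) ≃+ ZMod 3) ∧
    (∀ j : ℕ, 2 ≤ j →
      Submodule.torsion ℤ ((Fin ((j + 2).choose 2) → ℤ) ⧸
        LinearMap.range (Nmat j).mulVecLin) = ⊥) :=
  ⟨torsion_coker_Nmat_of_le_one zero_le_one, torsion_coker_Nmat_of_le_one le_rfl,
    fun _ => torsion_coker_Nmat_eq_bot⟩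
end

section
/- For every positive integer r, gcd(r, C(r,2)) = gcd(r, C(r,2), C(r,3)) if and only if 3 does not divide r, where C(r,2) and C(r,3) are binomial coefficients. -/
/-!
Since `k * C(n, k) = n * C(n - 1, k - 1)`, every divisor of `n` coprime to `k` divides `C(n, k)`.
Let `n ≠ 0`, let `p` be prime, and let `g` be the gcd of the `C(n, k)` with `1 ≤ k < p`. Then
`g ∣ n`, and `g` is divisible by the full power of `p` in `n`. If `p ∤ n`, then `g` is coprime to
`p`, so `g ∣ C(n, p)`. If `p ∣ n`, then `C(n - 1, p - 1) ≡ C(p - 1, p - 1) = 1` modulo `p` by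
Lucas, so `C(n, p)` has one factor `p` fewer than `n` and `g ∤ C(n, p)`. Finally take `p = 3`.
-/

variable {d k m n p : ℕ}

theorem dvd_choose_of_coprime (hdn : d ∣ n) (hdk : d.Coprime k) : d ∣ n.choose k := by
  cases k with
  | zero => simpa using hdk
  | succ j =>
    cases n with
    | zero => simp
    | succ i =>
      apply hdk.dvd_of_dvd_mul_right
      rw [← Nat.add_one_mul_choose_eq]
      exact hdn.mul_right _

theorem choose_modEq_choose_of_modEq (hp : p.Prime) (hk : k < p) (hmn : m ≡ n [MOD p]) :
    m.choose k ≡ n.choose k [MOD p] := by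
  have := Fact.mk hp
  have choose_modEq_choose_mod (a : ℕ) : a.choose k ≡ (a % p).choose k [MOD p] := by
    simpa [Nat.mod_eq_of_lt hk, Nat.div_eq_of_lt hk] using
      Choose.choose_modEq_choose_mod_mul_choose_div_nat (n := a) (k := k) (p := p)
  calc
    m.choose k ≡ (m % p).choose k [MOD p] := choose_modEq_choose_mod m
    _ = (n % p).choose k := by rw [hmn]
    _ ≡ n.choose k [MOD p] := (choose_modEq_choose_mod n).symm

theorem not_dvd_choose_mul_sub_one (hp : p.Prime) (hm : m ≠ 0) :
    ¬ p ∣ (m * p - 1).choose (p - 1) := by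
  have hmod : m * p - 1 ≡ p - 1 [MOD p] :=
    Nat.ModEq.sub (Nat.mul_pos (Nat.pos_of_ne_zero hm) hp.pos) hp.one_le
      (by simp [Nat.ModEq]) rfl
  have hchoose := choose_modEq_choose_of_modEq hp (Nat.sub_lt hp.pos one_pos) hmod
  rw [hchoose.dvd_iff dvd_rfl, Nat.choose_self]
  exact hp.not_dvd_one

theorem factorization_choose_prime_add_one (hp : p.Prime) (hn : n ≠ 0) (hpn : p ∣ n) :
    (n.choose p).factorization p + 1 = n.factorization p := by
  obtain ⟨m, rfl⟩ := exists_eq_mul_left_of_dvd hpn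
  have hm : m ≠ 0 := left_ne_zero_of_mul hn
  have hndvd := not_dvd_choose_mul_sub_one hp hm
  have hchoose : (m * p - 1).choose (p - 1) ≠ 0 := fun h ↦ hndvd (h ▸ dvd_zero p)
  rw [Nat.choose_mul_right hp.ne_zero, Nat.factorization_mul hm hchoose,
    Nat.factorization_mul hm hp.ne_zero]
  simp [Nat.factorization_eq_zero_of_not_dvd hndvd, hp.factorization_self]

theorem not_ordProj_dvd_choose_prime (hp : p.Prime) (hn : n ≠ 0) (hpn : p ∣ n) :
    ¬ ordProj[p] n ∣ n.choose p := by
  have hchoose : n.choose p ≠ 0 :=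
    Nat.choose_ne_zero (Nat.le_of_dvd (Nat.pos_of_ne_zero hn) hpn)
  rw [hp.pow_dvd_iff_le_factorization hchoose, ← factorization_choose_prime_add_one hp hn hpn]
  exact Nat.not_succ_le_self _

theorem dvd_choose_prime_iff_not_dvd (hp : p.Prime) (hn : n ≠ 0) (hdn : d ∣ n)
    (hd : ordProj[p] n ∣ d) : d ∣ n.choose p ↔ ¬ p ∣ n := by
  refine ⟨fun hdvd hpn ↦ not_ordProj_dvd_choose_prime hp hn hpn (hd.trans hdvd), fun hpn ↦ ?_⟩
  have hcop : n.Coprime p := (hp.coprime_iff_not_dvd.2 hpn).symm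
  exact dvd_choose_of_coprime hdn (hcop.coprime_dvd_left hdn)

theorem gcd_Ico_choose_dvd_self (hm : 1 < m) : (Finset.Ico 1 m).gcd n.choose ∣ n := by
  simpa using Finset.gcd_dvd (f := n.choose) (Finset.mem_Ico.2 ⟨le_rfl, hm⟩)

theorem ordProj_dvd_gcd_Ico_choose (hp : p.Prime) :
    ordProj[p] n ∣ (Finset.Ico 1 p).gcd n.choose := by
  refine Finset.dvd_gcd fun k hk ↦ ?_
  obtain ⟨hk_pos, hk_lt⟩ := Finset.mem_Ico.1 hk
  have hpk : p.Coprime k := Nat.coprime_of_lt_prime (Nat.ne_of_gt hk_pos) hk_lt hp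
  exact dvd_choose_of_coprime (Nat.ordProj_dvd n p) (hpk.pow_left _)

theorem gcd_choose_two_eq_gcd_choose_three_iff_general (hp : p.Prime) (hn : n ≠ 0) :
    (Finset.Ico 1 p).gcd n.choose = ((Finset.Ico 1 p).gcd n.choose).gcd (n.choose p) ↔
      ¬ p ∣ n := by
  rw [eq_comm, Nat.gcd_eq_left_iff_dvd]
  exact dvd_choose_prime_iff_not_dvd hp hn (gcd_Ico_choose_dvd_self hp.one_lt)
    (ordProj_dvd_gcd_Ico_choose hp)

/-- For every positive integer `r`, `gcd(r, C(r,2)) = gcd(r, C(r,2), C(r,3))` if and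
only if `3` does not divide `r`. -/
theorem gcd_choose_two_eq_gcd_choose_three_iff (r : ℕ) (hr : 0 < r) :
    Nat.gcd r (r.choose 2) = Nat.gcd (Nat.gcd r (r.choose 2)) (r.choose 3) ↔
      ¬ (3 ∣ r) := by
  have hgcd : (Finset.Ico 1 3).gcd r.choose = r.gcd (r.choose 2) := by
    simp [show Finset.Ico 1 3 = {1, 2} from rfl, gcd_eq_nat_gcd]
  exact hgcd ▸ gcd_choose_two_eq_gcd_choose_three_iff_general Nat.prime_three hr.ne'
end
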